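/- arXiv:2604.17578 — 2 statements merged into one kernel-verified Lean document; each statement's English description precedes it below -/
import Mathlib

section
/- Let S₁, …, S_m be subsets of {1, …, T}, and for each t ∈ {1, …, T} let n_t := #{ i ∈ {1,…,m} : t ∈ S_i } denote the number of sets containing t. Assume n_t ≥ 1 for every t ∈ {1, …, T}. Then for all nonnegative real numbers a₁, …, a_T, it holds that Σ_{i=1}^m ( Σ_{t ∈ S_i} a_t/n_t )² ≤ (1 / min_{t∈{1,…,T}} n_t) · ( Σ_{t=1}^T a_t )². -/
open Finset

/-!
Let `W` be the matrix with entries `1 / n_t` for `t ∈ S_i` and `0` otherwise, so that the inner sums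
form the vector `x = W a`. The theorem is the interpolation `‖x‖₂² ≤ ‖x‖_∞ ‖x‖₁`: the columns of `W`
sum to `1`, so `‖x‖₁ ≤ ‖a‖₁`, and its entries are at most `1 / min n_t`, so
`‖x‖_∞ ≤ ‖a‖₁ / min n_t`.
-/

section WeightedSums

variable {ι κ R : Type*} [PartialOrder R]

theorem sum_sq_le_mul_sum [Semiring R] [IsOrderedRing R] {s : Finset ι} {x : ι → R} {c : R}
    (hx : ∀ i ∈ s, 0 ≤ x i) (hxc : ∀ i ∈ s, x i ≤ c) :
    ∑ i ∈ s, x i ^ 2 ≤ c * ∑ i ∈ s, x i := by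
  rw [mul_sum]
  refine sum_le_sum fun i hi ↦ ?_
  rw [sq]
  exact mul_le_mul_of_nonneg_right (hxc i hi) (hx i hi)

theorem sum_mul_le_mul_sum_of_le [Semiring R] [IsOrderedRing R] {s : Finset ι} {w a : ι → R} {c : R}
    (hwc : ∀ i ∈ s, w i ≤ c) (ha : ∀ i ∈ s, 0 ≤ a i) :
    ∑ i ∈ s, w i * a i ≤ c * ∑ i ∈ s, a i := by
  rw [mul_sum]
  exact sum_le_sum fun i hi ↦ mul_le_mul_of_nonneg_right (hwc i hi) (ha i hi)

theorem sum_sum_mul_le_mul_sum [Semiring R] [IsOrderedRing R] {s : Finset ι} {t : Finset κ}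
    {w : ι → κ → R} {a : κ → R} {r : R}
    (hwr : ∀ j ∈ t, ∑ i ∈ s, w i j ≤ r) (ha : ∀ j ∈ t, 0 ≤ a j) :
    ∑ i ∈ s, ∑ j ∈ t, w i j * a j ≤ r * ∑ j ∈ t, a j := by
  rw [sum_comm]
  simp only [← sum_mul]
  exact sum_mul_le_mul_sum_of_le hwr ha

theorem sum_sq_sum_mul_le [CommSemiring R] [IsOrderedRing R] {s : Finset ι} {t : Finset κ}
    {w : ι → κ → R} {a : κ → R} {c r : R} (hc : 0 ≤ c)
    (hw : ∀ i ∈ s, ∀ j ∈ t, 0 ≤ w i j) (hwc : ∀ i ∈ s, ∀ j ∈ t, w i j ≤ c)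
    (hwr : ∀ j ∈ t, ∑ i ∈ s, w i j ≤ r) (ha : ∀ j ∈ t, 0 ≤ a j) :
    ∑ i ∈ s, (∑ j ∈ t, w i j * a j) ^ 2 ≤ c * r * (∑ j ∈ t, a j) ^ 2 := by
  have hA : 0 ≤ ∑ j ∈ t, a j := sum_nonneg ha
  calc ∑ i ∈ s, (∑ j ∈ t, w i j * a j) ^ 2
      ≤ (c * ∑ j ∈ t, a j) * ∑ i ∈ s, ∑ j ∈ t, w i j * a j :=
        sum_sq_le_mul_sum (fun i hi ↦ sum_nonneg fun j hj ↦ mul_nonneg (hw i hi j hj) (ha j hj))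
          fun i hi ↦ sum_mul_le_mul_sum_of_le (hwc i hi) ha
    _ ≤ (c * ∑ j ∈ t, a j) * (r * ∑ j ∈ t, a j) :=
        mul_le_mul_of_nonneg_left (sum_sum_mul_le_mul_sum hwr ha) (mul_nonneg hc hA)
    _ = c * r * (∑ j ∈ t, a j) ^ 2 := by ring

end WeightedSums

theorem sum_sq_partial_sums_le_general {ι α K : Type*} [Fintype ι] [Fintype α] [DecidableEq α]
    [Semifield K] [LinearOrder K] [IsStrictOrderedRing K] (S : ι → Finset α) (n : α → ℕ)
    (hn : ∀ t, n t = #{i | t ∈ S i}) {k : ℕ} (hk : 0 < k) (hkn : ∀ t, k ≤ n t)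
    (a : α → K) (ha : ∀ t, 0 ≤ a t) :
    ∑ i, (∑ t ∈ S i, a t / (n t : K)) ^ 2 ≤ 1 / (k : K) * (∑ t, a t) ^ 2 := by
  let w (i : ι) (t : α) : K := if t ∈ S i then 1 / (n t : K) else 0
  have sum_eq (i : ι) : ∑ t ∈ S i, a t / (n t : K) = ∑ t, w i t * a t := by
    simp [w, div_eq_inv_mul]
  have w_nonneg (i : ι) (t : α) : 0 ≤ w i t := by
    dsimp only [w]; positivity
  have w_le (i : ι) (t : α) : w i t ≤ 1 / (k : K) := by
    dsimp only [w]
    split_ifs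
    · exact one_div_le_one_div_of_le (mod_cast hk) (mod_cast hkn t)
    · positivity
  have sum_w (t : α) : ∑ i, w i t = 1 := by
    have hnt : (n t : K) ≠ 0 := mod_cast (hk.trans_le (hkn t)).ne'
    rw [← sum_filter, sum_const, ← hn, nsmul_eq_mul, mul_one_div_cancel hnt]
  calc ∑ i, (∑ t ∈ S i, a t / (n t : K)) ^ 2
      = ∑ i, (∑ t, w i t * a t) ^ 2 := by simp only [sum_eq]
    _ ≤ 1 / (k : K) * 1 * (∑ t, a t) ^ 2 :=
        sum_sq_sum_mul_le (by positivity) (fun i _ t _ ↦ w_nonneg i t) (fun i _ t _ ↦ w_le i t)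
          (fun t _ ↦ (sum_w t).le) fun t _ ↦ ha t
    _ = 1 / (k : K) * (∑ t, a t) ^ 2 := by rw [mul_one]

/-- Combinatorial inequality: if `S₁, …, S_m ⊆ {1,…,T}` and `n t` counts how many of the
sets contain `t` (with every `n t ≥ 1`), then for nonnegative `a₁, …, a_T`,
`Σ_i (Σ_{t ∈ S_i} a_t/n_t)² ≤ (1 / min_t n_t) · (Σ_t a_t)²`. -/
theorem sum_sq_partial_sums_le
    {T m : ℕ} (hT : 0 < T)
    (S : Fin m → Finset (Fin T))
    (n : Fin T → ℕ)
    (hn : ∀ t, n t = (Finset.univ.filter (fun i => t ∈ S i)).card)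
    (hn1 : ∀ t, 1 ≤ n t)
    (a : Fin T → ℝ) (ha : ∀ t, 0 ≤ a t) :
    ∑ i, (∑ t ∈ S i, a t / (n t : ℝ)) ^ 2 ≤
      (1 / ((Finset.univ.inf' (Finset.univ_nonempty_iff.mpr (Fin.pos_iff_nonempty.mp hT)) n : ℕ) : ℝ)) *
        (∑ t, a t) ^ 2 := by
  exact sum_sq_partial_sums_le_general S n hn ((le_inf'_iff _ _).2 fun t _ ↦ hn1 t)
    (fun t ↦ inf'_le n (mem_univ t)) a ha
end

section
/- Suppose α, β, γ > 0 and ζ ∈ ℝ. Let r* := max{ζ, 0} + √(max{ln(β·γ^{α/2})/γ, 0}). Then the infimum over r ≥ 0 of the function r ↦ r^α + β·exp(−γ(r − ζ)²) is at most min{ β + (max{ζ, 0})^α , γ^{−α/2} + (r*)^α }; in particular, (r*)^α + β·exp(−γ(r* − ζ)²) ≤ γ^{−α/2} + (r*)^α. -/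
open Real

/-!
The infimum is at most the value at `max ζ 0`, where the Gaussian term is at most `β`, and the value
at `r*`. Solving `β·exp(-γx²) = c` gives `x² = log(β/c)/γ`, and `r*` lies at least this `x` to the
right of `ζ`. The choice `c = γ^{-α/2}` turns `β/c` into `β·γ^{α/2}`.
-/

/-- The radius `r*`, with the target level `c` for the Gaussian term in place of the paper's
`γ^{-α/2}`. For `γ, c > 0`, the Gaussian `β·exp(-γ(r-ζ)²)` is at most `c` from this radius on. -/
noncomputable def gaussianCutoff (β γ ζ c : ℝ) : ℝ :=
  max ζ 0 + √(max (log (β / c) / γ) 0)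

lemma gaussianCutoff_nonneg (β γ ζ c : ℝ) : 0 ≤ gaussianCutoff β γ ζ c :=
  add_nonneg (le_max_right _ _) (sqrt_nonneg _)

lemma sqrt_le_gaussianCutoff_sub (β γ ζ c : ℝ) :
    √(log (β / c) / γ) ≤ gaussianCutoff β γ ζ c - ζ := by
  have h_sqrt : √(log (β / c) / γ) ≤ √(max (log (β / c) / γ) 0) :=
    sqrt_le_sqrt (le_max_left _ _)
  have h_center : ζ ≤ max ζ 0 := le_max_left _ _
  rw [gaussianCutoff]
  linarith

lemma mul_exp_neg_le_of_log_div_le {β c t : ℝ} (hc : 0 < c) (ht : log (β / c) ≤ t) :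
    β * exp (-t) ≤ c := by
  have h_exp : β / c ≤ exp t := (le_exp_log _).trans (exp_le_exp.mpr ht)
  rw [exp_neg, ← div_eq_mul_inv]
  exact (div_le_comm₀ hc (exp_pos t)).mp h_exp

lemma mul_exp_neg_mul_sq_le_of_sqrt_le {β γ c x : ℝ} (hγ : 0 < γ) (hc : 0 < c)
    (hx : √(log (β / c) / γ) ≤ x) : β * exp (-γ * x ^ 2) ≤ c := by
  have h_sq : log (β / c) / γ ≤ x ^ 2 := (sqrt_le_left ((sqrt_nonneg _).trans hx)).mp hx
  rw [neg_mul]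
  exact mul_exp_neg_le_of_log_div_le hc ((div_le_iff₀' hγ).mp h_sq)

lemma mul_exp_neg_mul_sq_le_self {β γ : ℝ} (hβ : 0 ≤ β) (hγ : 0 ≤ γ) (x : ℝ) :
    β * exp (-γ * x ^ 2) ≤ β :=
  mul_le_of_le_one_right hβ <| exp_le_one_iff.mpr <|
    mul_nonpos_of_nonpos_of_nonneg (neg_nonpos.mpr hγ) (sq_nonneg x)

lemma sInf_add_le_of_bddBelow_of_nonneg {ι : Type*} {s : Set ι} {f g : ι → ℝ}
    (hf : BddBelow (f '' s)) (hg : ∀ x ∈ s, 0 ≤ g x) {x : ι} (hx : x ∈ s) :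
    sInf {v : ℝ | ∃ y ∈ s, v = f y + g y} ≤ f x + g x := by
  obtain ⟨m, hm⟩ := hf
  refine csInf_le ⟨m, ?_⟩ ⟨x, hx, rfl⟩
  rintro _ ⟨y, hy, rfl⟩
  exact le_add_of_le_of_nonneg (hm ⟨y, hy, rfl⟩) (hg y hy)

theorem opt_r_bound_general {f : ℝ → ℝ} {β γ c : ℝ} (ζ : ℝ) (hf : BddBelow (f '' Set.Ici 0))
    (hβ : 0 ≤ β) (hγ : 0 < γ) (hc : 0 < c) :
    sInf {v : ℝ | ∃ r : ℝ, 0 ≤ r ∧ v = f r + β * exp (-γ * (r - ζ) ^ 2)} ≤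
        min (β + f (max ζ 0)) (c + f (gaussianCutoff β γ ζ c)) ∧
      f (gaussianCutoff β γ ζ c) + β * exp (-γ * (gaussianCutoff β γ ζ c - ζ) ^ 2) ≤
        c + f (gaussianCutoff β γ ζ c) := by
  have h_center : f (max ζ 0) + β * exp (-γ * (max ζ 0 - ζ) ^ 2) ≤ β + f (max ζ 0) := by
    rw [add_comm β]
    gcongr
    exact mul_exp_neg_mul_sq_le_self hβ hγ.le _
  have h_cutoff : f (gaussianCutoff β γ ζ c) + β * exp (-γ * (gaussianCutoff β γ ζ c - ζ) ^ 2) ≤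
      c + f (gaussianCutoff β γ ζ c) := by
    rw [add_comm c]
    gcongr
    exact mul_exp_neg_mul_sq_le_of_sqrt_le hγ hc (sqrt_le_gaussianCutoff_sub β γ ζ c)
  have h_sInf {r : ℝ} (hr : 0 ≤ r) :
      sInf {v : ℝ | ∃ r : ℝ, 0 ≤ r ∧ v = f r + β * exp (-γ * (r - ζ) ^ 2)} ≤
        f r + β * exp (-γ * (r - ζ) ^ 2) :=
    sInf_add_le_of_bddBelow_of_nonneg (g := fun r ↦ β * exp (-γ * (r - ζ) ^ 2)) hf
      (fun _ _ ↦ mul_nonneg hβ (exp_nonneg _)) hr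
  exact ⟨le_min ((h_sInf (le_max_right ζ 0)).trans h_center)
    ((h_sInf (gaussianCutoff_nonneg β γ ζ c)).trans h_cutoff), h_cutoff⟩

/-- **Optimization of `r ↦ r^α + β·exp(−γ(r−ζ)²)`.** For `α, β, γ > 0` and `ζ ∈ ℝ`, with
`r* := max{ζ,0} + √(max{ln(β γ^{α/2})/γ, 0})`, the infimum over `r ≥ 0` of
`r^α + β·exp(−γ(r−ζ)²)` is at most
`min{β + (max{ζ,0})^α, γ^{−α/2} + (r*)^α}`; in particular
`(r*)^α + β·exp(−γ(r*−ζ)²) ≤ γ^{−α/2} + (r*)^α`. -/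
theorem opt_r_bound (α β γ ζ : ℝ) (hα : 0 < α) (hβ : 0 < β) (hγ : 0 < γ) :
    (sInf {v : ℝ | ∃ r : ℝ, 0 ≤ r ∧ v = r ^ α + β * Real.exp (-γ * (r - ζ) ^ 2)} ≤
      min (β + (max ζ 0) ^ α)
        (γ ^ (-(α / 2)) +
          (max ζ 0 + Real.sqrt (max (Real.log (β * γ ^ (α / 2)) / γ) 0)) ^ α)) ∧
    ((max ζ 0 + Real.sqrt (max (Real.log (β * γ ^ (α / 2)) / γ) 0)) ^ α +
        β * Real.exp (-γ *
          ((max ζ 0 + Real.sqrt (max (Real.log (β * γ ^ (α / 2)) / γ) 0)) - ζ) ^ 2) ≤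
      γ ^ (-(α / 2)) +
        (max ζ 0 + Real.sqrt (max (Real.log (β * γ ^ (α / 2)) / γ) 0)) ^ α) := by
  have h_bdd : BddBelow ((fun r : ℝ ↦ r ^ α) '' Set.Ici 0) :=
    ⟨0, Set.forall_mem_image.mpr fun _ hr ↦ rpow_nonneg hr α⟩
  simpa only [gaussianCutoff, rpow_neg hγ.le, div_inv_eq_mul] using
    opt_r_bound_general ζ h_bdd hβ.le hγ (rpow_pos_of_pos hγ (-(α / 2)))
end
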